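/- arXiv:2011.04358 — 2 statements merged into one kernel-verified Lean document; each statement's English description precedes it below -/
import Mathlib

section
/- Let n ≥ 2 and let f be the symmetric quartic form on ℝⁿ determined by real coefficients a, b, c, d, e. Let Z^f be the set of pairs (r,s) of positive integers consisting of (k,1) and (1,k) for all k ∈ {1,…,n−1}, together with the pairs (k,n−k) for all k ∈ {1,…,n−1} in case a > 0 and b < 0. For a pair (r,s), define α = 4a + (3b+4c)r + 2dr², β = 4a + 3b(r+s) + 4drs, γ = 4a + (3b+4c)s + 2ds², Δ = β² − 4αγ, A = r[a + (b+c)r + dr² + er³], B = rs(b + 2dr + 4er²), C = rs[2c + d(r+s) + 6ers], D = rs(b + 2ds + 4es²), E = s[a + (b+c)s + ds² + es³], P = A(β⁴ − 4β²αγ + 2α²γ²) − Bβα(β² − 3αγ) + Cα²(β² − 2αγ) − Dβα³ + 2Eα⁴, Q = −Aβ(β² − 2αγ) + Bα(β² − αγ) − Cβα² + Dα³, and (when α ≠ 0) R = (P² − Q²Δ)/(4α⁴). Say that condition (★) holds for (r,s) if both: [(α ≤ 0 and β ≤ 0) or (β ≥ 0 and γ ≥ 0) or (P ≥ 0 and Q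 ≥ 0) or (R ≥ 0 and P ≥ 0) or (R ≤ 0 and Q ≥ 0)] and [(α ≥ 0 and β ≥ 0) or (β ≤ 0 and γ ≤ 0) or (P ≥ 0 and Q ≤ 0) or (R ≥ 0 and P ≥ 0) or (R ≤ 0 and Q ≤ 0)]. Then f(x) ≥ 0 for every x ∈ ℝⁿ with all coordinates nonnegative if and only if both: (i) f(1_k, 0_{n−k}) ≥ 0 for every k ∈ {1,…,n}; and (ii) condition (★) holds for every (r,s) ∈ Z^f such that Δ ≥ 0 and α ≠ 0. -/
open Finset

/-- The `k`-th power sum of `x ∈ ℝⁿ`. -/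
noncomputable def powSum (n : ℕ) (k : ℕ) (x : Fin n → ℝ) : ℝ := ∑ i, x i ^ k

/-- The symmetric quartic form with coefficients `a, b, c, d, e`. -/
noncomputable def quarticF (n : ℕ) (a b c d e : ℝ) (x : Fin n → ℝ) : ℝ :=
  a * powSum n 4 x + b * powSum n 3 x * powSum n 1 x + c * (powSum n 2 x) ^ 2
    + d * powSum n 2 x * (powSum n 1 x) ^ 2 + e * (powSum n 1 x) ^ 4

/-- The point `(1_k, 0_{n−k}) ∈ ℝⁿ`. -/
noncomputable def onesPt (n k : ℕ) : Fin n → ℝ := fun i => if (i : ℕ) < k then 1 else 0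

/-- The set `Z^f` of index pairs: `(k,1)` and `(1,k)` for `1 ≤ k ≤ n−1`, together with
`(k, n−k)` for `1 ≤ k ≤ n−1` in case `a > 0 > b`. -/
def Zf (n : ℕ) (a b : ℝ) : Set (ℕ × ℕ) :=
  {p | ∃ k : ℕ, 1 ≤ k ∧ k ≤ n - 1 ∧ (p = (k, 1) ∨ p = (1, k))} ∪
  {p | a > 0 ∧ b < 0 ∧ ∃ k : ℕ, 1 ≤ k ∧ k ≤ n - 1 ∧ p = (k, n - k)}

noncomputable def cα (a b c d : ℝ) (r : ℕ) : ℝ :=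
  4 * a + (3 * b + 4 * c) * (r : ℝ) + 2 * d * (r : ℝ) ^ 2

noncomputable def cβ (a b d : ℝ) (r s : ℕ) : ℝ :=
  4 * a + 3 * b * ((r : ℝ) + (s : ℝ)) + 4 * d * (r : ℝ) * (s : ℝ)

noncomputable def cγ (a b c d : ℝ) (s : ℕ) : ℝ :=
  4 * a + (3 * b + 4 * c) * (s : ℝ) + 2 * d * (s : ℝ) ^ 2

noncomputable def cΔ (a b c d : ℝ) (r s : ℕ) : ℝ :=
  (cβ a b d r s) ^ 2 - 4 * (cα a b c d r) * (cγ a b c d s)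

noncomputable def cA (a b c d e : ℝ) (r : ℕ) : ℝ :=
  (r : ℝ) * (a + (b + c) * (r : ℝ) + d * (r : ℝ) ^ 2 + e * (r : ℝ) ^ 3)

noncomputable def cB (b d e : ℝ) (r s : ℕ) : ℝ :=
  (r : ℝ) * (s : ℝ) * (b + 2 * d * (r : ℝ) + 4 * e * (r : ℝ) ^ 2)

noncomputable def cC (c d e : ℝ) (r s : ℕ) : ℝ :=
  (r : ℝ) * (s : ℝ) * (2 * c + d * ((r : ℝ) + (s : ℝ)) + 6 * e * (r : ℝ) * (s : ℝ))

noncomputable def cD (b d e : ℝ) (r s : ℕ) : ℝ :=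
  (r : ℝ) * (s : ℝ) * (b + 2 * d * (s : ℝ) + 4 * e * (s : ℝ) ^ 2)

noncomputable def cE (a b c d e : ℝ) (s : ℕ) : ℝ :=
  (s : ℝ) * (a + (b + c) * (s : ℝ) + d * (s : ℝ) ^ 2 + e * (s : ℝ) ^ 3)

noncomputable def cP (a b c d e : ℝ) (r s : ℕ) : ℝ :=
  cA a b c d e r * ((cβ a b d r s) ^ 4
      - 4 * (cβ a b d r s) ^ 2 * (cα a b c d r) * (cγ a b c d s)
      + 2 * (cα a b c d r) ^ 2 * (cγ a b c d s) ^ 2)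
    - cB b d e r s * (cβ a b d r s) * (cα a b c d r)
      * ((cβ a b d r s) ^ 2 - 3 * (cα a b c d r) * (cγ a b c d s))
    + cC c d e r s * (cα a b c d r) ^ 2
      * ((cβ a b d r s) ^ 2 - 2 * (cα a b c d r) * (cγ a b c d s))
    - cD b d e r s * (cβ a b d r s) * (cα a b c d r) ^ 3
    + 2 * cE a b c d e s * (cα a b c d r) ^ 4

noncomputable def cQ (a b c d e : ℝ) (r s : ℕ) : ℝ :=
  -(cA a b c d e r) * (cβ a b d r s)
      * ((cβ a b d r s) ^ 2 - 2 * (cα a b c d r) * (cγ a b c d s))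
    + cB b d e r s * (cα a b c d r)
      * ((cβ a b d r s) ^ 2 - (cα a b c d r) * (cγ a b c d s))
    - cC c d e r s * (cβ a b d r s) * (cα a b c d r) ^ 2
    + cD b d e r s * (cα a b c d r) ^ 3

noncomputable def cR (a b c d e : ℝ) (r s : ℕ) : ℝ :=
  ((cP a b c d e r s) ^ 2 - (cQ a b c d e r s) ^ 2 * cΔ a b c d r s)
    / (4 * (cα a b c d r) ^ 4)

/-- The discriminant condition (★) for the pair `(r, s)`. -/
def starCond (a b c d e : ℝ) (r s : ℕ) : Prop :=
  ((cα a b c d r ≤ 0 ∧ cβ a b d r s ≤ 0) ∨ (0 ≤ cβ a b d r s ∧ 0 ≤ cγ a b c d s) ∨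
    (0 ≤ cP a b c d e r s ∧ 0 ≤ cQ a b c d e r s) ∨
    (0 ≤ cR a b c d e r s ∧ 0 ≤ cP a b c d e r s) ∨
    (cR a b c d e r s ≤ 0 ∧ 0 ≤ cQ a b c d e r s)) ∧
  ((0 ≤ cα a b c d r ∧ 0 ≤ cβ a b d r s) ∨ (cβ a b d r s ≤ 0 ∧ cγ a b c d s ≤ 0) ∨
    (0 ≤ cP a b c d e r s ∧ cQ a b c d e r s ≤ 0) ∨
    (0 ≤ cR a b c d e r s ∧ 0 ≤ cP a b c d e r s) ∨
    (cR a b c d e r s ≤ 0 ∧ cQ a b c d e r s ≤ 0))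

open scoped Topology

/-! Minimize the form `f` over the simplex `p₁ = 1`, `x ≥ 0`, and among the minimizers take one,
`x`, with `p₃` largest. Replace three coordinates by new ones with the same sum `σ` and the same
sum of squares, so that only their product changes, say by `δ`: by Newton's identities `p₃` grows
by `3δ` and `f` by `(4aσ + 3b)δ`. Extremality therefore forces the slope `4aσ + 3b` to be positive
whenever `δ > 0` can occur, and nonpositive whenever `δ < 0` can. It follows that `x` has at most
two distinct positive values `t` and `u`, and if both are repeated then `a > 0 > b` and no
coordinate vanishes, so that their multiplicities `(r, s)` lie in `Z^f`. Stationarity of `f` when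
mass moves between `t` and `u` says that `t / u` is a root of `αw² + βw + γ`, and `(★)` says that
`f` is nonnegative at its positive roots. If `α` vanishes one uses `(s, r)` instead, and if `γ`
vanishes as well then so does `β`, and `f` is a multiple of a fourth power along the pair
`(t, u)`. -/

section PowerSums

variable {n : ℕ} {x : Fin n → ℝ}

lemma powSum_one (x : Fin n → ℝ) : powSum n 1 x = ∑ i, x i := by
  simp only [powSum, pow_one]

lemma powSum_smul (k : ℕ) (l : ℝ) (x : Fin n → ℝ) : powSum n k (l • x) = l ^ k * powSum n k x := by
  simp only [powSum, Pi.smul_apply, smul_eq_mul, mul_pow, mul_sum]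

lemma quarticF_smul (a b c d e l : ℝ) (x : Fin n → ℝ) :
    quarticF n a b c d e (l • x) = l ^ 4 * quarticF n a b c d e x := by
  simp only [quarticF, powSum_smul]
  ring

lemma continuous_powSum (n k : ℕ) : Continuous (powSum n k) := by
  unfold powSum
  fun_prop

lemma continuous_quarticF (n : ℕ) (a b c d e : ℝ) : Continuous (quarticF n a b c d e) := by
  have := continuous_powSum n
  unfold quarticF
  fun_prop

lemma powSum_update (k : ℕ) (x : Fin n → ℝ) (i : Fin n) (v : ℝ) :
    powSum n k (Function.update x i v) = powSum n k x + v ^ k - x i ^ k := by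
  have hne : ∀ j ∈ univ.erase i, Function.update x i v j ^ k = x j ^ k := fun j hj => by
    rw [Function.update_of_ne (ne_of_mem_erase hj)]
  simp only [powSum, ← add_sum_erase univ _ (mem_univ i), sum_congr rfl hne, Function.update_self]
  ring

lemma hasDerivAt_powSum_line (k : ℕ) (x v : Fin n → ℝ) :
    HasDerivAt (fun h : ℝ => powSum n k (x + h • v)) (k * ∑ i, x i ^ (k - 1) * v i) 0 := by
  have hcoord : ∀ i, HasDerivAt (fun h : ℝ => x i + h * v i) (v i) 0 := fun i => by
    simpa only [one_mul] using ((hasDerivAt_id' (0 : ℝ)).mul_const (v i)).const_add (x i)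
  have hsum := HasDerivAt.fun_sum fun i (_ : i ∈ univ) => (hcoord i).fun_pow k
  simpa only [powSum, Pi.add_apply, Pi.smul_apply, smul_eq_mul, zero_mul, add_zero, mul_assoc,
    ← mul_sum] using hsum

lemma powSum_eq_of_two_values {S T : Finset (Fin n)} {t u : ℝ} {k : ℕ} (hST : Disjoint S T)
    (hS : ∀ i ∈ S, x i = t) (hT : ∀ i ∈ T, x i = u) (h0 : ∀ i ∉ S ∪ T, x i = 0) (hk : k ≠ 0) :
    powSum n k x = S.card * t ^ k + T.card * u ^ k := by
  calc powSum n k x = ∑ i ∈ S ∪ T, x i ^ k :=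
        (sum_subset (subset_univ _) fun i _ hi => by rw [h0 i hi, zero_pow hk]).symm
    _ = ∑ _ ∈ S, t ^ k + ∑ _ ∈ T, u ^ k := by
        rw [sum_union hST]
        exact congrArg₂ (· + ·) (sum_congr rfl fun i hi => by rw [hS i hi])
          (sum_congr rfl fun i hi => by rw [hT i hi])
    _ = S.card * t ^ k + T.card * u ^ k := by simp only [sum_const, nsmul_eq_mul]

lemma eventually_nonneg_line {v : Fin n → ℝ} (hx : ∀ i, 0 ≤ x i) (hv : ∀ i, v i ≠ 0 → 0 < x i) :
    ∀ᶠ h : ℝ in 𝓝 0, ∀ i, 0 ≤ (x + h • v) i := by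
  refine Filter.eventually_all.mpr fun i => ?_
  by_cases hvi : v i = 0
  · exact .of_forall fun h => by simpa [hvi] using hx i
  · have hcont : Continuous fun h : ℝ => (x + h • v) i := by
      simp only [Pi.add_apply, Pi.smul_apply]
      fun_prop
    have hpos : 0 < (x + (0 : ℝ) • v) i := by simpa using hv i hvi
    exact (hcont.continuousAt.eventually_const_lt hpos).mono fun _ => le_of_lt

lemma quarticF_nonneg_of_stdSimplex {a b c d e : ℝ}
    (h : ∀ y ∈ stdSimplex ℝ (Fin n), 0 ≤ quarticF n a b c d e y) (hx : ∀ i, 0 ≤ x i) :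
    0 ≤ quarticF n a b c d e x := by
  rcases (sum_nonneg fun i (_ : i ∈ univ) => hx i).eq_or_lt with hsum | hsum
  · have hx0 : x = (0 : ℝ) • x := by
      funext i
      simpa using (sum_eq_zero_iff_of_nonneg fun i _ => hx i).mp hsum.symm i (mem_univ i)
    rw [hx0, quarticF_smul]
    simp
  · have hmem : (∑ i, x i)⁻¹ • x ∈ stdSimplex ℝ (Fin n) := by
      refine ⟨fun i => mul_nonneg (inv_nonneg.mpr hsum.le) (hx i), ?_⟩
      simp only [Pi.smul_apply, smul_eq_mul, ← mul_sum]
      exact inv_mul_cancel₀ hsum.ne'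
    have := h _ hmem
    rw [quarticF_smul] at this
    exact nonneg_of_mul_nonneg_right this (by positivity)

end PowerSums

section TwoValues

variable {n : ℕ} {a b c d e : ℝ} {x : Fin n → ℝ} {r s : ℕ} {t u : ℝ}

/-- The value of the quartic form at a point with `r` coordinates equal to `t`, `s` coordinates
equal to `u`, and zeros elsewhere, as a binary quartic form in `(t, u)`. -/
noncomputable def twoVal (a b c d e : ℝ) (r s : ℕ) (t u : ℝ) : ℝ :=
  cA a b c d e r * t ^ 4 + cB b d e r s * t ^ 3 * u + cC c d e r s * t ^ 2 * u ^ 2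
    + cD b d e r s * t * u ^ 3 + cE a b c d e s * u ^ 4

lemma twoVal_swap (a b c d e : ℝ) (r s : ℕ) (t u : ℝ) :
    twoVal a b c d e r s t u = twoVal a b c d e s r u t := by
  unfold twoVal cA cB cC cD cE
  ring

lemma twoVal_eq_pow_mul (a b c d e : ℝ) (r s : ℕ) (t : ℝ) (hu : u ≠ 0) :
    twoVal a b c d e r s t u = u ^ 4 * twoVal a b c d e r s (t / u) 1 := by
  unfold twoVal
  field_simp

lemma twoVal_zero_right (a b c d e : ℝ) (r s : ℕ) (t : ℝ) :
    twoVal a b c d e r s t 0 = cA a b c d e r * t ^ 4 := by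
  simp [twoVal]

lemma quarticF_eq_twoVal {S T : Finset (Fin n)} (hST : Disjoint S T) (hS : ∀ i ∈ S, x i = t)
    (hT : ∀ i ∈ T, x i = u) (h0 : ∀ i ∉ S ∪ T, x i = 0) :
    quarticF n a b c d e x = twoVal a b c d e S.card T.card t u := by
  have hp : ∀ {k : ℕ}, k ≠ 0 → powSum n k x = S.card * t ^ k + T.card * u ^ k :=
    powSum_eq_of_two_values hST hS hT h0
  rw [quarticF, hp one_ne_zero, hp two_ne_zero, hp three_ne_zero, hp four_ne_zero]
  unfold twoVal cA cB cC cD cE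
  ring

lemma quarticF_eq_cA_mul_pow {S : Finset (Fin n)} (hS : ∀ i ∈ S, x i = t)
    (h0 : ∀ i ∉ S, x i = 0) : quarticF n a b c d e x = cA a b c d e S.card * t ^ 4 := by
  rw [quarticF_eq_twoVal (disjoint_empty_right S) hS (u := 0) (by simp) (by simpa using h0),
    twoVal_zero_right]

lemma quarticF_onesPt {k : ℕ} (hk : k ≤ n) :
    quarticF n a b c d e (onesPt n k) = cA a b c d e k := by
  have hcard : (univ.filter fun i : Fin n => (i : ℕ) < k).card = k := by
    rw [Fin.card_filter_val_lt, min_eq_right hk]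
  rw [quarticF_eq_cA_mul_pow (S := univ.filter fun i : Fin n => (i : ℕ) < k) (t := 1)
    (by simp [onesPt]) (by simp [onesPt]), hcard, one_pow, mul_one]

lemma onesPt_nonneg (n k : ℕ) (i : Fin n) : 0 ≤ onesPt n k i := by
  unfold onesPt
  split_ifs <;> norm_num

lemma exists_nonneg_quarticF_eq_twoVal (a b c d e : ℝ) (hrs : r + s ≤ n) (ht : 0 ≤ t)
    (hu : 0 ≤ u) :
    ∃ x : Fin n → ℝ, (∀ i, 0 ≤ x i) ∧ quarticF n a b c d e x = twoVal a b c d e r s t u := by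
  obtain ⟨S, -, rfl⟩ : ∃ S ⊆ (univ : Finset (Fin n)), S.card = r :=
    exists_subset_card_eq (by rw [card_fin]; omega)
  obtain ⟨T, hTS, rfl⟩ : ∃ T ⊆ Sᶜ, T.card = s :=
    exists_subset_card_eq (by rw [card_compl, Fintype.card_fin]; omega)
  have hST : Disjoint S T := disjoint_compl_right.mono_right hTS
  refine ⟨fun i => if i ∈ S then t else if i ∈ T then u else 0, fun i => ?_,
    quarticF_eq_twoVal hST (fun i hi => if_pos hi) (fun i hi => ?_) fun i hi => ?_⟩
  · dsimp only
    split_ifs <;> first | assumption | exact le_rfl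
  · simp only [if_neg (disjoint_right.mp hST hi), if_pos hi]
  · rw [mem_union, not_or] at hi
    simp only [if_neg hi.1, if_neg hi.2]

end TwoValues

section Discriminant

variable {a b c d e : ℝ} {r s : ℕ} {t u : ℝ}

lemma nonneg_add_mul_iff {P Q σ : ℝ} (hσ : 0 ≤ σ) :
    0 ≤ P + Q * σ ↔ (0 ≤ P ∧ 0 ≤ Q) ∨ (0 ≤ P ^ 2 - Q ^ 2 * σ ^ 2 ∧ 0 ≤ P) ∨
      (P ^ 2 - Q ^ 2 * σ ^ 2 ≤ 0 ∧ 0 ≤ Q) := by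
  rw [← mul_pow, sub_nonneg, sub_nonpos]
  constructor
  · intro h
    rcases le_total 0 Q with hQ | hQ
    · rcases le_total 0 P with hP | hP
      · exact .inl ⟨hP, hQ⟩
      · exact .inr (.inr ⟨sq_le_sq' (by linarith) (by linarith), hQ⟩)
    · have hQσ : Q * σ ≤ 0 := mul_nonpos_of_nonpos_of_nonneg hQ hσ
      exact .inr (.inl ⟨sq_le_sq' (by linarith) (by linarith), by linarith⟩)
  · rintro (⟨hP, hQ⟩ | ⟨hsq, hP⟩ | ⟨hsq, hQ⟩)
    · positivity
    · linarith [(abs_le_of_sq_le_sq' hsq hP).1]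
    · linarith [(abs_le_of_sq_le_sq' hsq (mul_nonneg hQ hσ)).1]

lemma quadratic_root_nonpos_iff {α β γ σ : ℝ} (hα : α ≠ 0) (hσ : 0 ≤ σ)
    (hdisc : σ ^ 2 = β ^ 2 - 4 * α * γ) :
    (-β + σ) / (2 * α) ≤ 0 ↔ (α ≤ 0 ∧ β ≤ 0) ∨ (0 ≤ β ∧ 0 ≤ γ) := by
  have : 4 * (α * γ) = β ^ 2 - σ ^ 2 := by linarith
  rcases lt_or_gt_of_ne hα with hneg | hpos
  · have hγ : 0 ≤ γ ↔ β ^ 2 ≤ σ ^ 2 := by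
      constructor <;> intro <;> nlinarith
    rw [div_le_iff_of_neg (by linarith), zero_mul, neg_add_eq_sub, sub_nonneg, hγ]
    rcases le_or_gt β 0 with hβ | hβ
    · exact iff_of_true (hβ.trans hσ) (.inl ⟨hneg.le, hβ⟩)
    · rw [sq_le_sq₀ hβ.le hσ]
      simp only [hβ.not_ge, hβ.le, and_false, false_or, true_and]
  · have hγ : 0 ≤ γ ↔ σ ^ 2 ≤ β ^ 2 := by
      rw [← mul_nonneg_iff_of_pos_left hpos]
      constructor <;> intro <;> linarith
    rw [div_le_iff₀ (by linarith), zero_mul, neg_add_nonpos_iff, hγ]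
    rcases le_or_gt 0 β with hβ | hβ
    · rw [sq_le_sq₀ hσ hβ]
      simp only [hpos.not_ge, hβ, false_and, false_or, true_and]
    · refine iff_of_false (by linarith) ?_
      simp only [hpos.not_ge, hβ.not_ge, false_and, or_self, not_false_eq_true]

lemma starCond_bracket_iff {α β γ σ P Q : ℝ} (hα : α ≠ 0) (hσ : 0 ≤ σ)
    (hdisc : σ ^ 2 = β ^ 2 - 4 * α * γ) {R : ℝ} (hR : R = (P ^ 2 - Q ^ 2 * σ ^ 2) / (4 * α ^ 4)) :
    ((α ≤ 0 ∧ β ≤ 0) ∨ (0 ≤ β ∧ 0 ≤ γ) ∨ (0 ≤ P ∧ 0 ≤ Q) ∨ (0 ≤ R ∧ 0 ≤ P) ∨ (R ≤ 0 ∧ 0 ≤ Q)) ↔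
      (0 < (-β + σ) / (2 * α) → 0 ≤ P + Q * σ) := by
  have hden : 0 < 4 * α ^ 4 := by positivity
  have hR_nonneg : 0 ≤ R ↔ 0 ≤ P ^ 2 - Q ^ 2 * σ ^ 2 := by
    rw [hR, le_div_iff₀ hden, zero_mul]
  have hR_nonpos : R ≤ 0 ↔ P ^ 2 - Q ^ 2 * σ ^ 2 ≤ 0 := by
    rw [hR, div_le_iff₀ hden, zero_mul]
  rw [← or_assoc, imp_iff_not_or, not_lt, quadratic_root_nonpos_iff hα hσ hdisc,
    nonneg_add_mul_iff hσ, hR_nonneg, hR_nonpos]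

lemma twoVal_of_isRoot {w : ℝ} (hw : cα a b c d r * w ^ 2 + cβ a b d r s * w + cγ a b c d s = 0) :
    2 * cα a b c d r ^ 4 * twoVal a b c d e r s w 1 =
      cP a b c d e r s + cQ a b c d e r s * (2 * cα a b c d r * w + cβ a b d r s) := by
  unfold twoVal cP cQ
  generalize cα a b c d r = α at *
  generalize cβ a b d r s = β at *
  generalize cγ a b c d s = γ at *
  have h₂ : (α * w) ^ 2 = -β * (α * w) - α * γ := by linear_combination α * hw
  have h₃ : (α * w) ^ 3 = (β ^ 2 - α * γ) * (α * w) + β * α * γ := by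
    linear_combination (α * w - β) * h₂
  have h₄ : (α * w) ^ 4 = (-β ^ 3 + 2 * α * β * γ) * (α * w) - α * γ * (β ^ 2 - α * γ) := by
    linear_combination α * w * h₃ + (β ^ 2 - α * γ) * h₂
  linear_combination 2 * cA a b c d e r * h₄ + 2 * cB b d e r s * α * h₃
    + 2 * cC c d e r s * α ^ 2 * h₂

lemma twoVal_isRoot_nonneg_iff {w τ : ℝ} (hα : cα a b c d r ≠ 0)
    (hw : cα a b c d r * w ^ 2 + cβ a b d r s * w + cγ a b c d s = 0)
    (hτ : w = (-cβ a b d r s + τ) / (2 * cα a b c d r)) :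
    0 ≤ twoVal a b c d e r s w 1 ↔ 0 ≤ cP a b c d e r s + cQ a b c d e r s * τ := by
  have hτ' : 2 * cα a b c d r * w + cβ a b d r s = τ := by
    rw [hτ]
    field_simp
    ring
  rw [← hτ', ← twoVal_of_isRoot hw, mul_nonneg_iff_of_pos_left (by positivity)]

lemma starCond_iff (hΔ : 0 ≤ cΔ a b c d r s) (hα : cα a b c d r ≠ 0) :
    starCond a b c d e r s ↔ ∀ w : ℝ, 0 < w →
      cα a b c d r * w ^ 2 + cβ a b d r s * w + cγ a b c d s = 0 →
        0 ≤ twoVal a b c d e r s w 1 := by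
  set σ := √(cΔ a b c d r s)
  have hσ0 : 0 ≤ σ := Real.sqrt_nonneg _
  have hσ2 : σ ^ 2 = cΔ a b c d r s := Real.sq_sqrt hΔ
  have hroots : ∀ w, cα a b c d r * w ^ 2 + cβ a b d r s * w + cγ a b c d s = 0 ↔
      w = (-cβ a b d r s + σ) / (2 * cα a b c d r) ∨
        w = (-cβ a b d r s + -σ) / (2 * cα a b c d r) := fun w => by
    rw [sq w, ← sub_eq_add_neg]
    exact quadratic_eq_zero_iff hα (hσ2.symm.trans (sq σ)) w
  have hneg : (- -cβ a b d r s + σ) / (2 * -cα a b c d r) =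
      (-cβ a b d r s + -σ) / (2 * cα a b c d r) := by
    rw [← neg_div_neg_eq]
    ring
  have hplus := starCond_bracket_iff (P := cP a b c d e r s) (Q := cQ a b c d e r s)
    (R := cR a b c d e r s) hα hσ0 hσ2 (by rw [hσ2, cR])
  -- Negating `(α, β, γ, Q)` exchanges the two roots and the two halves of `(★)`.
  have hminus := starCond_bracket_iff (P := cP a b c d e r s) (Q := -cQ a b c d e r s)
    (R := cR a b c d e r s) (β := -cβ a b d r s) (γ := -cγ a b c d s) (neg_ne_zero.mpr hα) hσ0
    (by rw [hσ2, cΔ]; ring) (by rw [hσ2, cR]; ring)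
  rw [hneg, neg_mul_comm] at hminus
  simp only [Left.neg_nonpos_iff, Left.nonneg_neg_iff] at hminus
  rw [starCond, hplus, hminus]
  simp only [hroots]
  rw [← twoVal_isRoot_nonneg_iff hα ((hroots _).mpr (.inl rfl)) rfl,
    ← twoVal_isRoot_nonneg_iff hα ((hroots _).mpr (.inr rfl)) rfl]
  constructor
  · rintro ⟨h₁, h₂⟩ w hw (rfl | rfl)
    exacts [h₁ hw, h₂ hw]
  · exact fun h => ⟨fun hw => h _ hw (.inl rfl), fun hw => h _ hw (.inr rfl)⟩

lemma twoVal_nonneg_of_starCond (ht : 0 < t) (hu : 0 < u) (hα : cα a b c d r ≠ 0)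
    (hstar : 0 ≤ cΔ a b c d r s → starCond a b c d e r s)
    (hroot : cα a b c d r * t ^ 2 + cβ a b d r s * t * u + cγ a b c d s * u ^ 2 = 0) :
    0 ≤ twoVal a b c d e r s t u := by
  have hw : cα a b c d r * (t / u) ^ 2 + cβ a b d r s * (t / u) + cγ a b c d s = 0 := by
    field_simp
    linear_combination hroot
  have hΔ : cΔ a b c d r s = (2 * cα a b c d r * (t / u) + cβ a b d r s) ^ 2 := by
    unfold cΔ
    linear_combination -4 * cα a b c d r * hw
  have hΔ0 : 0 ≤ cΔ a b c d r s := hΔ ▸ sq_nonneg _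
  rw [twoVal_eq_pow_mul (hu := hu.ne')]
  exact mul_nonneg (by positivity) ((starCond_iff hΔ0 hα).mp (hstar hΔ0) _ (div_pos ht hu) hw)

lemma pow_mul_twoVal_of_eq_zero (t u : ℝ) (hα : cα a b c d r = 0) (hβ : cβ a b d r s = 0)
    (hγ : cγ a b c d s = 0) :
    (r : ℝ) ^ 4 * twoVal a b c d e r s t u = cA a b c d e r * (r * t + s * u) ^ 4 := by
  -- `hB`, `hC`, `hD`, `hE` say that `F = twoVal` satisfies `s * ∂F/∂t = r * ∂F/∂u`.
  have hB : r * cB b d e r s = 4 * s * cA a b c d e r := by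
    unfold cα at hα
    unfold cA cB
    linear_combination (-(r : ℝ) * s) * hα
  have hC : 2 * r * cC c d e r s = 3 * s * cB b d e r s := by
    unfold cα at hα
    unfold cβ at hβ
    unfold cB cC
    linear_combination (-(r : ℝ) * s) * hβ + (r : ℝ) * s * hα
  have hD : 3 * r * cD b d e r s = 2 * s * cC c d e r s := by
    unfold cβ at hβ
    unfold cγ at hγ
    unfold cC cD
    linear_combination (-(r : ℝ) * s) * hγ + (r : ℝ) * s * hβ
  have hE : 4 * r * cE a b c d e s = s * cD b d e r s := by
    unfold cγ at hγ
    unfold cD cE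
    linear_combination (r : ℝ) * s * hγ
  have hC' : r ^ 2 * cC c d e r s = 6 * s ^ 2 * cA a b c d e r := by
    linear_combination (r : ℝ) / 2 * hC + 3 / 2 * s * hB
  have hD' : r ^ 3 * cD b d e r s = 4 * s ^ 3 * cA a b c d e r := by
    linear_combination (r : ℝ) ^ 2 / 3 * hD + 2 / 3 * s * hC'
  have hE' : r ^ 4 * cE a b c d e s = s ^ 4 * cA a b c d e r := by
    linear_combination (r : ℝ) ^ 3 / 4 * hE + 1 / 4 * s * hD'
  unfold twoVal
  linear_combination r ^ 3 * t ^ 3 * u * hB + r ^ 2 * t ^ 2 * u ^ 2 * hC' + r * t * u ^ 3 * hD'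
    + u ^ 4 * hE'

lemma twoVal_nonneg_of_starCond_of_starCond_swap (hr : 0 < r) (ht : 0 < t) (hu : 0 < u)
    (hA : 0 ≤ cA a b c d e r)
    (hstar : 0 ≤ cΔ a b c d r s → cα a b c d r ≠ 0 → starCond a b c d e r s)
    (hstar' : 0 ≤ cΔ a b c d s r → cα a b c d s ≠ 0 → starCond a b c d e s r)
    (hroot : cα a b c d r * t ^ 2 + cβ a b d r s * t * u + cγ a b c d s * u ^ 2 = 0) :
    0 ≤ twoVal a b c d e r s t u := by
  by_cases hα : cα a b c d r = 0
  · by_cases hγ : cγ a b c d s = 0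
    · have hβ : cβ a b d r s = 0 := by simpa [hα, hγ, ht.ne', hu.ne'] using hroot
      refine nonneg_of_mul_nonneg_right (a := (r : ℝ) ^ 4) ?_ (by positivity)
      rw [pow_mul_twoVal_of_eq_zero t u hα hβ hγ]
      positivity
    · rw [twoVal_swap]
      refine twoVal_nonneg_of_starCond hu ht hγ (fun hΔ => hstar' hΔ hγ) ?_
      unfold cα cβ cγ at *
      linear_combination hroot
  · exact twoVal_nonneg_of_starCond ht hu hα (fun hΔ => hstar hΔ hα) hroot

end Discriminant

section Multiplicities

variable {n : ℕ} {x : Fin n → ℝ} {t u : ℝ}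

lemma mem_Zf_iff {n r s : ℕ} {a b : ℝ} : (r, s) ∈ Zf n a b ↔
    1 ≤ r ∧ 1 ≤ s ∧ r + s ≤ n ∧ (r = 1 ∨ s = 1 ∨ 0 < a ∧ b < 0 ∧ r + s = n) := by
  simp only [Zf, Set.mem_union, Set.mem_ofPred_eq, Prod.mk.injEq, gt_iff_lt]
  constructor
  · rintro (⟨k, hk, hkn, ⟨rfl, rfl⟩ | ⟨rfl, rfl⟩⟩ | ⟨ha, hb, k, hk, hkn, rfl, rfl⟩)
    · omega
    · omega
    · exact ⟨hk, by omega, by omega, .inr (.inr ⟨ha, hb, by omega⟩)⟩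
  · rintro ⟨hr, hs, hrs, rfl | rfl | ⟨ha, hb, hn⟩⟩
    · exact .inl ⟨s, hs, by omega, .inr ⟨rfl, rfl⟩⟩
    · exact .inl ⟨r, hr, by omega, .inl ⟨rfl, rfl⟩⟩
    · exact .inr ⟨ha, hb, r, hr, by omega, rfl, by omega⟩

lemma swap_mem_Zf {n r s : ℕ} {a b : ℝ} (h : (r, s) ∈ Zf n a b) : (s, r) ∈ Zf n a b := by
  obtain ⟨hr, hs, hrs, hcases⟩ := mem_Zf_iff.mp h
  exact mem_Zf_iff.mpr ⟨hs, hr, by omega, by grind⟩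

/-- The set of indices at which `x` takes the value `t`; its cardinality is the multiplicity of `t`
as a coordinate of `x`. -/
noncomputable def levelSet (x : Fin n → ℝ) (t : ℝ) : Finset (Fin n) := {i | x i = t}

lemma mem_levelSet {i : Fin n} : i ∈ levelSet x t ↔ x i = t := by
  simp only [levelSet, mem_filter_univ]

lemma card_levelSet_pos (x : Fin n → ℝ) (i : Fin n) : 0 < (levelSet x (x i)).card :=
  card_pos.mpr ⟨i, mem_levelSet.mpr rfl⟩

lemma disjoint_levelSet (x : Fin n → ℝ) (htu : t ≠ u) :
    Disjoint (levelSet x t) (levelSet x u) :=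
  disjoint_left.mpr fun _ ht hu => htu ((mem_levelSet.mp ht).symm.trans (mem_levelSet.mp hu))

end Multiplicities

section Triples

lemma exists_nonneg_add_eq_mul_eq {S p : ℝ} (hS : 0 ≤ S) (hp : 0 ≤ p) (hdisc : 4 * p ≤ S ^ 2) :
    ∃ y z : ℝ, 0 ≤ y ∧ 0 ≤ z ∧ y + z = S ∧ y * z = p := by
  have hsq : √(S ^ 2 - 4 * p) ^ 2 = S ^ 2 - 4 * p := Real.sq_sqrt (sub_nonneg.mpr hdisc)
  have hle : √(S ^ 2 - 4 * p) ≤ S := Real.sqrt_le_iff.mpr ⟨hS, by linarith⟩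
  have hnonneg := Real.sqrt_nonneg (S ^ 2 - 4 * p)
  refine ⟨(S + √(S ^ 2 - 4 * p)) / 2, (S - √(S ^ 2 - 4 * p)) / 2, by linarith, by linarith,
    by ring, ?_⟩
  linear_combination -1 / 4 * hsq

/- Keeping the sum and the sum of squares of `u, v, w` shifts the monic cubic with these roots by a
constant; as `u + h` is a root of the new cubic, the constant is the value of the old one there. -/
lemma eventually_exists_triple (u : ℝ) {v w : ℝ} (hv : 0 < v) (hw : 0 < w) (hvw : v ≠ w) :
    ∀ᶠ h : ℝ in 𝓝 0, ∃ y z : ℝ, 0 ≤ y ∧ 0 ≤ z ∧ (u + h) + y + z = u + v + w ∧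
      (u + h) ^ 2 + y ^ 2 + z ^ 2 = u ^ 2 + v ^ 2 + w ^ 2 ∧
      (u + h) * y * z - u * v * w = h * (u + h - v) * (u + h - w) := by
  have eventually_pos {g : ℝ → ℝ} (hg : Continuous g) (hg0 : 0 < g 0) : ∀ᶠ h in 𝓝 0, 0 < g h :=
    hg.continuousAt.eventually_const_lt hg0
  have hsum := eventually_pos (g := fun h => v + w - h) (by fun_prop) (by linarith)
  have hprod := eventually_pos (g := fun h => v * w - h * (v + w - u) + h ^ 2) (by fun_prop)
    (by simpa using mul_pos hv hw)
  have hdisc := eventually_pos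
    (g := fun h => (v + w - h) ^ 2 - 4 * (v * w - h * (v + w - u) + h ^ 2)) (by fun_prop) <| by
      have : 0 < (v - w) ^ 2 := sq_pos_of_ne_zero (sub_ne_zero.mpr hvw)
      linarith
  filter_upwards [hsum, hprod, hdisc] with h hsum hprod hdisc
  obtain ⟨y, z, hy, hz, hadd, hmul⟩ :=
    exists_nonneg_add_eq_mul_eq hsum.le hprod.le (sub_pos.mp hdisc).le
  refine ⟨y, z, hy, hz, by linarith, ?_, ?_⟩
  · linear_combination (y + z + (v + w - h)) * hadd - 2 * hmul
  · linear_combination (u + h) * hmul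

lemma newton_three (u v w : ℝ) : u ^ 3 + v ^ 3 + w ^ 3 =
    3 * (u * v * w) + (3 * (u + v + w) * (u ^ 2 + v ^ 2 + w ^ 2) - (u + v + w) ^ 3) / 2 := by
  ring

lemma newton_four (u v w : ℝ) : u ^ 4 + v ^ 4 + w ^ 4 = 4 * (u + v + w) * (u * v * w) +
    (2 * (u + v + w) ^ 2 * (u ^ 2 + v ^ 2 + w ^ 2) - (u + v + w) ^ 4 +
      (u ^ 2 + v ^ 2 + w ^ 2) ^ 2) / 2 := by
  ring

lemma exists_mem_stdSimplex_replace_triple {n : ℕ} (a b c d e : ℝ) {x : Fin n → ℝ}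
    (hx : x ∈ stdSimplex ℝ (Fin n)) {i j k : Fin n} (hij : i ≠ j) (hik : i ≠ k) (hjk : j ≠ k)
    {u v w : ℝ} (hu : 0 ≤ u) (hv : 0 ≤ v) (hw : 0 ≤ w) (hsum : u + v + w = x i + x j + x k)
    (hsq : u ^ 2 + v ^ 2 + w ^ 2 = x i ^ 2 + x j ^ 2 + x k ^ 2) :
    ∃ y ∈ stdSimplex ℝ (Fin n),
      powSum n 3 y = powSum n 3 x + 3 * (u * v * w - x i * x j * x k) ∧
      quarticF n a b c d e y = quarticF n a b c d e x +
        (4 * a * (x i + x j + x k) + 3 * b) * (u * v * w - x i * x j * x k) := by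
  set y := Function.update (Function.update (Function.update x i u) j v) k w with hy
  have hp : ∀ m, powSum n m y =
      powSum n m x + (u ^ m + v ^ m + w ^ m) - (x i ^ m + x j ^ m + x k ^ m) := fun m => by
    rw [hy, powSum_update, powSum_update, powSum_update, Function.update_of_ne hjk.symm,
      Function.update_of_ne hik.symm, Function.update_of_ne hij.symm]
    ring
  have hx1 : powSum n 1 x = 1 := (powSum_one x).trans hx.2
  have hp1 : powSum n 1 y = 1 := by
    rw [hp]
    linear_combination hx1 + hsum
  have hp2 : powSum n 2 y = powSum n 2 x := by
    rw [hp]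
    linear_combination hsq
  have hp3 : powSum n 3 y = powSum n 3 x + 3 * (u * v * w - x i * x j * x k) := by
    rw [hp, newton_three, newton_three (x i), hsum, hsq]
    ring
  have hp4 : powSum n 4 y =
      powSum n 4 x + 4 * (x i + x j + x k) * (u * v * w - x i * x j * x k) := by
    rw [hp, newton_four, newton_four (x i), hsum, hsq]
    ring
  refine ⟨y, ⟨fun l => ?_, (powSum_one y).symm.trans hp1⟩, hp3, ?_⟩
  · simp only [hy, Function.update_apply]
    split_ifs <;> first | assumption | exact hx.1 l
  · rw [quarticF, quarticF, hp1, hp2, hp3, hp4, hx1]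
    ring

end Triples

section Extremal

/-- A minimizer of the quartic form over the standard simplex at which, among all such minimizers,
the third power sum is largest. -/
structure IsExtremal (n : ℕ) (a b c d e : ℝ) (x : Fin n → ℝ) : Prop where
  mem : x ∈ stdSimplex ℝ (Fin n)
  isMinOn : IsMinOn (quarticF n a b c d e) (stdSimplex ℝ (Fin n)) x
  isMaxOn : IsMaxOn (powSum n 3)
    (stdSimplex ℝ (Fin n) ∩ {y | quarticF n a b c d e y = quarticF n a b c d e x}) x

lemma exists_isMinOn_isMaxOn_fiber {X : Type*} [TopologicalSpace X] {K : Set X} {f g : X → ℝ}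
    (hK : IsCompact K) (hne : K.Nonempty) (hf : Continuous f) (hg : Continuous g) :
    ∃ x ∈ K, IsMinOn f K x ∧ IsMaxOn g (K ∩ {y | f y = f x}) x := by
  obtain ⟨x₀, hx₀, hmin⟩ := hK.exists_isMinOn hne hf.continuousOn
  obtain ⟨x, ⟨hx, hfx⟩, hmax⟩ := (hK.inter_right (isClosed_eq hf continuous_const)).exists_isMaxOn
    ⟨x₀, hx₀, rfl⟩ hg.continuousOn
  rw [Set.mem_ofPred_eq] at hfx
  exact ⟨x, hx, fun y hy => hfx.trans_le (hmin hy), by rwa [hfx]⟩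

lemma exists_isExtremal (n : ℕ) [NeZero n] (a b c d e : ℝ) : ∃ x, IsExtremal n a b c d e x := by
  obtain ⟨x, hx, hmin, hmax⟩ := exists_isMinOn_isMaxOn_fiber (isCompact_stdSimplex ℝ (Fin n))
    ⟨_, single_mem_stdSimplex ℝ 0⟩ (continuous_quarticF n a b c d e) (continuous_powSum n 3)
  exact ⟨x, hx, hmin, hmax⟩

namespace IsExtremal

variable {n : ℕ} {a b c d e : ℝ} {x : Fin n → ℝ} {i j k : Fin n}

lemma eventually_slope_sign (hx : IsExtremal n a b c d e x) (hij : i ≠ j) (hik : i ≠ k)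
    (hj : 0 < x j) (hk : 0 < x k) (hjk : x j ≠ x k) :
    ∀ᶠ h in 𝓝[>] 0,
      (0 < h * (x i + h - x j) * (x i + h - x k) → 0 < 4 * a * (x i + x j + x k) + 3 * b) ∧
      (h * (x i + h - x j) * (x i + h - x k) < 0 → 4 * a * (x i + x j + x k) + 3 * b ≤ 0) := by
  filter_upwards [(eventually_exists_triple (x i) hj hk hjk).filter_mono nhdsWithin_le_nhds,
    self_mem_nhdsWithin] with h ⟨v, w, hv, hw, hsum, hsq, hδ⟩ hh
  obtain ⟨y, hy, hp3, hf⟩ := exists_mem_stdSimplex_replace_triple a b c d e hx.mem hij hik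
    (ne_of_apply_ne x hjk) (add_nonneg (hx.mem.1 i) (le_of_lt hh)) hv hw hsum hsq
  rw [hδ] at hp3 hf
  have hmin : quarticF n a b c d e x ≤ quarticF n a b c d e y := hx.isMinOn hy
  have hδ_nonneg : 0 ≤
      (4 * a * (x i + x j + x k) + 3 * b) * (h * (x i + h - x j) * (x i + h - x k)) := by
    linarith
  refine ⟨fun hpos => (nonneg_of_mul_nonneg_left hδ_nonneg hpos).lt_of_ne' fun hzero => ?_,
    fun hneg => nonpos_of_mul_nonneg_left hδ_nonneg hneg⟩
  rw [hzero, zero_mul, add_zero] at hf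
  have hmax : powSum n 3 y ≤ powSum n 3 x := hx.isMaxOn ⟨hy, hf⟩
  linarith

lemma slope_pos_of_lt_of_lt (hx : IsExtremal n a b c d e x) (hij : x i < x j) (hjk : x j < x k) :
    0 < 4 * a * (x i + x j + x k) + 3 * b := by
  have hj : 0 < x j := (hx.mem.1 i).trans_lt hij
  obtain ⟨h, ⟨hsign, -⟩, hh0, hh⟩ := ((hx.eventually_slope_sign (ne_of_apply_ne x hij.ne)
    (ne_of_apply_ne x (hij.trans hjk).ne) hj (hj.trans hjk) hjk.ne).and
    (Ioo_mem_nhdsGT (sub_pos.mpr hij))).exists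
  exact hsign (mul_pos_of_neg_of_neg (mul_neg_of_pos_of_neg hh0 (by linarith)) (by linarith))

lemma slope_pos_of_lt_of_le (hx : IsExtremal n a b c d e x) (hne : i ≠ j) (hk : 0 < x k)
    (hkj : x k < x j) (hji : x j ≤ x i) : 0 < 4 * a * (x i + x j + x k) + 3 * b := by
  obtain ⟨h, ⟨hsign, -⟩, hh⟩ := ((hx.eventually_slope_sign hne
    (ne_of_apply_ne x (hkj.trans_le hji).ne') (hk.trans hkj) hk hkj.ne').and
    self_mem_nhdsWithin).exists
  have hh : 0 < h := hh
  exact hsign (mul_pos (mul_pos hh (by linarith)) (by linarith))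

lemma slope_nonpos_of_le_of_lt (hx : IsExtremal n a b c d e x) (hne : i ≠ j) (hj : 0 < x j)
    (hji : x j ≤ x i) (hik : x i < x k) : 4 * a * (x i + x j + x k) + 3 * b ≤ 0 := by
  have hjk : x j < x k := hji.trans_lt hik
  obtain ⟨h, ⟨-, hsign⟩, hh0, hh⟩ := ((hx.eventually_slope_sign hne (ne_of_apply_ne x hik.ne) hj
    (hj.trans hjk) hjk.ne).and (Ioo_mem_nhdsGT (sub_pos.mpr hik))).exists
  exact hsign (mul_neg_of_pos_of_neg (mul_pos hh0 (by linarith)) (by linarith))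

lemma not_lt_of_pos_of_lt (hx : IsExtremal n a b c d e x) (hi : 0 < x i) (hij : x i < x j) :
    ¬ x j < x k := fun hjk => by
  have hpos := hx.slope_pos_of_lt_of_lt hij hjk
  have hnonpos := hx.slope_nonpos_of_le_of_lt (ne_of_apply_ne x hij.ne') hi hij.le hjk
  linarith

lemma eq_zero_or_eq_or_eq (hx : IsExtremal n a b c d e x) (hj : 0 < x j) (hji : x j < x i)
    (l : Fin n) : x l = 0 ∨ x l = x i ∨ x l = x j := by
  by_contra! hne
  have hl : 0 < x l := (hx.mem.1 l).lt_of_ne' hne.1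
  rcases hne.2.2.lt_or_gt with hlj | hjl
  · exact hx.not_lt_of_pos_of_lt hl hlj hji
  · rcases hne.2.1.lt_or_gt with hli | hil
    · exact hx.not_lt_of_pos_of_lt hj hjl hli
    · exact hx.not_lt_of_pos_of_lt hj hji hil

lemma pos_neg_ne_zero_of_double {i₁ i₂ j₁ j₂ : Fin n} (hx : IsExtremal n a b c d e x)
    (hi : i₁ ≠ i₂) (hj : j₁ ≠ j₂) (hxi : x i₁ = x i₂) (hxj : x j₁ = x j₂) (hpos : 0 < x j₁)
    (hlt : x j₁ < x i₁) : 0 < a ∧ b < 0 ∧ ∀ l, x l ≠ 0 := by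
  have hi_pos := hx.slope_pos_of_lt_of_le hi.symm hpos hlt hxi.le
  have hj_nonpos := hx.slope_nonpos_of_le_of_lt hj.symm hpos hxj.le (hxj ▸ hlt)
  rw [← hxi] at hi_pos
  rw [← hxj] at hj_nonpos
  have ha : 0 < a := pos_of_mul_pos_left (b := x i₁ - x j₁) (by linarith) (by linarith)
  have hb : b < 0 := by
    have := mul_pos ha (add_pos (add_pos hpos hpos) (hpos.trans hlt))
    linarith
  refine ⟨ha, hb, fun l hl => ?_⟩
  have hl_pos := hx.slope_pos_of_lt_of_lt (hl ▸ hpos) hlt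
  rw [hl] at hl_pos
  have := mul_pos ha hpos
  linarith

lemma sum_gradient_mul_eq_zero (hx : IsExtremal n a b c d e x) {v : Fin n → ℝ}
    (hsum : ∑ l, v l = 0) (hv : ∀ l, v l ≠ 0 → 0 < x l) :
    ∑ l, (4 * a * x l ^ 3 + 3 * b * x l ^ 2 + (4 * c * powSum n 2 x + 2 * d) * x l) * v l = 0 := by
  have hp1 : ∀ h : ℝ, powSum n 1 (x + h • v) = 1 := fun h => by
    simp only [powSum_one, Pi.add_apply, Pi.smul_apply, smul_eq_mul, sum_add_distrib, ← mul_sum,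
      hsum, hx.mem.2, mul_zero, add_zero]
  have hmin : IsLocalMin (fun h : ℝ => quarticF n a b c d e (x + h • v)) 0 := by
    filter_upwards [eventually_nonneg_line hx.mem.1 hv] with h hh
    simpa using hx.isMinOn ⟨hh, (powSum_one _).symm.trans (hp1 h)⟩
  have hline := fun k => hasDerivAt_powSum_line k x v
  have hderiv := (((((hline 4).const_mul a).fun_add ((hline 3).const_mul b)).fun_add
    (((hline 2).fun_pow 2).const_mul c)).fun_add ((hline 2).const_mul d)).add_const e
  have hzero := hmin.hasDerivAt_eq_zero <| by
    simpa only [quarticF, hp1, one_pow, mul_one] using hderiv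
  simp only [zero_smul, add_zero] at hzero
  norm_num at hzero
  simp only [add_mul, sum_add_distrib, mul_assoc, ← mul_sum]
  linear_combination hzero

lemma divided_difference_gradient_eq_zero (hx : IsExtremal n a b c d e x) (hi : 0 < x i)
    (hj : 0 < x j) (hij : x i ≠ x j) :
    4 * a * (x i ^ 2 + x i * x j + x j ^ 2) + 3 * b * (x i + x j) + 4 * c * powSum n 2 x + 2 * d
      = 0 := by
  have hgrad := hx.sum_gradient_mul_eq_zero (v := Pi.single i 1 - Pi.single j 1)
    (by simp) fun l hl => by
      rcases eq_or_ne l i with rfl | hli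
      · exact hi
      rcases eq_or_ne l j with rfl | hlj
      · exact hj
      · simp [hli, hlj] at hl
  simp only [Pi.sub_apply, mul_sub, sum_sub_distrib, Pi.single_apply, mul_ite, mul_one, mul_zero,
    sum_ite_eq', mem_univ, if_true] at hgrad
  refine (mul_eq_zero.mp ?_).resolve_left (sub_ne_zero.mpr hij)
  linear_combination hgrad

lemma card_levelSet_mem_Zf (hx : IsExtremal n a b c d e x) (hj : 0 < x j) (hji : x j < x i) :
    ((levelSet x (x i)).card, (levelSet x (x j)).card) ∈ Zf n a b := by
  have hr := card_levelSet_pos x i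
  have hs := card_levelSet_pos x j
  have hunion := card_union_of_disjoint (disjoint_levelSet x hji.ne')
  refine mem_Zf_iff.mpr ⟨hr, hs, hunion ▸ card_finset_fin_le _, ?_⟩
  by_contra! ⟨hr1, hs1, hrs⟩
  obtain ⟨i₂, hi₂, hii₂⟩ := exists_mem_ne (Nat.lt_of_le_of_ne hr (Ne.symm hr1)) i
  obtain ⟨j₂, hj₂, hjj₂⟩ := exists_mem_ne (Nat.lt_of_le_of_ne hs (Ne.symm hs1)) j
  obtain ⟨ha, hb, hne⟩ := hx.pos_neg_ne_zero_of_double hii₂.symm hjj₂.symm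
    (mem_levelSet.mp hi₂).symm (mem_levelSet.mp hj₂).symm hj hji
  have huniv : levelSet x (x i) ∪ levelSet x (x j) = univ := eq_univ_of_forall fun l => by
    rw [mem_union, mem_levelSet, mem_levelSet]
    exact (hx.eq_zero_or_eq_or_eq hj hji l).resolve_left (hne l)
  exact hrs ha hb (by rw [← hunion, huniv, card_fin])

lemma quarticF_nonneg_of_lt (hx : IsExtremal n a b c d e x)
    (hones : ∀ k, 1 ≤ k → k ≤ n → 0 ≤ quarticF n a b c d e (onesPt n k))
    (hstar : ∀ r s, (r, s) ∈ Zf n a b → 0 ≤ cΔ a b c d r s → cα a b c d r ≠ 0 →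
      starCond a b c d e r s)
    (hj : 0 < x j) (hji : x j < x i) : 0 ≤ quarticF n a b c d e x := by
  have hdisj := disjoint_levelSet x hji.ne'
  have hzero : ∀ l ∉ levelSet x (x i) ∪ levelSet x (x j), x l = 0 := fun l hl => by
    rw [mem_union, mem_levelSet, mem_levelSet] at hl
    exact (hx.eq_zero_or_eq_or_eq hj hji l).resolve_right hl
  have hmem := hx.card_levelSet_mem_Zf hj hji
  have hcrit := hx.divided_difference_gradient_eq_zero (hj.trans hji) hj hji.ne'
  have hp1 : powSum n 1 x = 1 := (powSum_one x).trans hx.mem.2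
  have hp : ∀ {k : ℕ}, k ≠ 0 → powSum n k x = (levelSet x (x i)).card * x i ^ k +
      (levelSet x (x j)).card * x j ^ k :=
    powSum_eq_of_two_values hdisj (fun _ => mem_levelSet.mp) (fun _ => mem_levelSet.mp) hzero
  rw [hp one_ne_zero] at hp1
  rw [hp two_ne_zero] at hcrit
  rw [quarticF_eq_twoVal hdisj (fun _ => mem_levelSet.mp) (fun _ => mem_levelSet.mp) hzero]
  generalize (levelSet x (x i)).card = r at *
  generalize (levelSet x (x j)).card = s at *
  obtain ⟨hr, -, hrs, -⟩ := mem_Zf_iff.mp hmem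
  refine twoVal_nonneg_of_starCond_of_starCond_swap hr (hj.trans hji) hj ?_ (hstar _ _ hmem)
    (hstar _ _ (swap_mem_Zf hmem)) ?_
  · rw [← quarticF_onesPt (by omega : r ≤ n)]
    exact hones r hr (by omega)
  · unfold cα cβ cγ
    linear_combination hcrit +
      (3 * b * (x i + x j) + 2 * d * (r * x i + s * x j + 1)) * hp1

lemma quarticF_nonneg (hx : IsExtremal n a b c d e x)
    (hones : ∀ k, 1 ≤ k → k ≤ n → 0 ≤ quarticF n a b c d e (onesPt n k))
    (hstar : ∀ r s, (r, s) ∈ Zf n a b → 0 ≤ cΔ a b c d r s → cα a b c d r ≠ 0 →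
      starCond a b c d e r s) : 0 ≤ quarticF n a b c d e x := by
  obtain ⟨i, -, hi⟩ : ∃ i ∈ univ, 0 < x i :=
    exists_lt_of_sum_lt (f := 0) (by simp [hx.mem.2])
  by_cases hsingle : ∀ l ∉ levelSet x (x i), x l = 0
  · have hcard : (levelSet x (x i)).card ≤ n := card_finset_fin_le _
    rw [quarticF_eq_cA_mul_pow (fun _ => mem_levelSet.mp) hsingle, ← quarticF_onesPt hcard]
    exact mul_nonneg (hones _ (card_levelSet_pos x i) hcard) (by positivity)
  · push Not at hsingle
    obtain ⟨j, hji, hj⟩ := hsingle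
    have hj : 0 < x j := (hx.mem.1 j).lt_of_ne' hj
    rcases lt_or_gt_of_ne (mem_levelSet.not.mp hji) with hlt | hlt
    · exact hx.quarticF_nonneg_of_lt hones hstar hj hlt
    · exact hx.quarticF_nonneg_of_lt hones hstar hi hlt

end IsExtremal

end Extremal

/-- Explicit discriminants deciding nonnegativity of a symmetric quartic on the
nonnegative orthant (the `QE4₊` algorithm). -/
theorem quartic_orthant_discriminants (n : ℕ) (hn : 2 ≤ n) (a b c d e : ℝ) :
    (∀ x : Fin n → ℝ, (∀ i, 0 ≤ x i) → quarticF n a b c d e x ≥ 0) ↔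
    ((∀ k : ℕ, 1 ≤ k → k ≤ n → quarticF n a b c d e (onesPt n k) ≥ 0) ∧
     (∀ r s : ℕ, (r, s) ∈ Zf n a b → 0 ≤ cΔ a b c d r s → cα a b c d r ≠ 0 →
       starCond a b c d e r s)) := by
  constructor
  · intro h
    refine ⟨fun k _ _ => h _ (onesPt_nonneg n k), fun r s hrs hΔ hα => ?_⟩
    refine (starCond_iff hΔ hα).mpr fun w hw _ => ?_
    obtain ⟨x, hx, hfx⟩ := exists_nonneg_quarticF_eq_twoVal a b c d e (mem_Zf_iff.mp hrs).2.2.1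
      hw.le zero_le_one
    exact hfx ▸ h x hx
  · rintro ⟨hones, hstar⟩ y hy
    have : NeZero n := ⟨by omega⟩
    obtain ⟨x, hx⟩ := exists_isExtremal n a b c d e
    exact quarticF_nonneg_of_stdSimplex
      (fun z hz => (hx.quarticF_nonneg hones hstar).trans (hx.isMinOn hz)) hy
end

section
/- Let A, B, C, D, E be real numbers with A > 0 and let F(t) = At⁴ + Bt³ + Ct² + Dt + E. Define Δ = −108A²D² + 4AC(27BD − 8C²) − 9B²(3BD − C²), G = 768A³E − 64A²(3BD + 2C²) + 144AB²C − 27B⁴, H = 384A³E² − 8A²(24BDE + 16C²E − 9CD²) + A(144B²CE − 3B²D² − 40BC²D + 8C⁴) − B²(27B²E − 9BCD + 2C³), and K = 256A³E³ − 192A²BDE² − 128A²C²E² + 144A²CD²E − 27A²D⁴ + 144AB²CE² − 6AB²D²E − 80ABC²DE + 18ABCD³ + 16AC⁴E − 4AC³D² − 27B⁴E² + 18B³CDE − 4B³D³ − 4B²C³E + B²C²D². Then F(t) ≥ 0 for every t ∈ ℝ if and only if (K ≥ 0 and Δ < 0) or (G ≥ 0 and H ≥ 0 and K ≥ 0). 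-/
/-!
Since `F` attains its minimum, it is nonnegative as soon as its values at the real critical points
are. Over `ℂ`, let `x, y, z` be the roots of `F′`, the first of them real. Up to positive factors,
`G`, `H` and `K` are the elementary symmetric functions of `F(x), F(y), F(z)`, and `Δ` is
`((x - y)(x - z)(y - z))²`.

If `y` and `z` are real, then `Δ ≥ 0`, and three real numbers are nonnegative exactly when their
elementary symmetric functions are. Otherwise `z = ȳ ≠ y`, so `Δ < 0`, and `K` is a positive
multiple of `F(x) |F(y)|²`; if moreover `F(y) = 0`, then `F = A (t - y)² (t - ȳ)²`, which is
nonnegative on the real line.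
-/

open Polynomial Filter
open scoped ComplexConjugate

section RealPolynomial

theorem tendsto_eval_cocompact_atTop_of_even_natDegree {P : ℝ[X]} (hpos : 0 < P.natDegree)
    (heven : Even P.natDegree) (hlead : 0 ≤ P.leadingCoeff) :
    Tendsto (fun t => P.eval t) (cocompact ℝ) atTop := by
  rw [cocompact_eq_atBot_atTop, tendsto_sup]
  constructor
  · have hdeg : 0 < (P.comp (-X)).degree := by
      rw [← natDegree_pos_iff_degree_pos, natDegree_comp, natDegree_neg, natDegree_X, mul_one]
      exact hpos
    have hlead' : 0 ≤ (P.comp (-X)).leadingCoeff := by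
      rw [leadingCoeff_comp (by simp), leadingCoeff_neg, leadingCoeff_X, heven.neg_one_pow,
        mul_one]
      exact hlead
    have hreflect := (tendsto_atTop_of_leadingCoeff_nonneg _ hdeg hlead').comp
      tendsto_neg_atBot_atTop
    simpa [Function.comp_def] using hreflect
  · exact tendsto_atTop_of_leadingCoeff_nonneg P (natDegree_pos_iff_degree_pos.mp hpos) hlead

theorem exists_isRoot_derivative_forall_eval_le {P : ℝ[X]} (heven : Even P.natDegree)
    (hlead : 0 ≤ P.leadingCoeff) :
    ∃ r, P.derivative.IsRoot r ∧ ∀ t, P.eval r ≤ P.eval t := by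
  rcases Nat.eq_zero_or_pos P.natDegree with hconst | hpos
  · rw [eq_C_of_natDegree_eq_zero hconst]
    exact ⟨0, by simp⟩
  · obtain ⟨r, hr⟩ := P.continuous.exists_forall_le
      (tendsto_eval_cocompact_atTop_of_even_natDegree hpos heven hlead)
    have hmin : IsLocalMin (fun t => P.eval t) r := Eventually.of_forall hr
    exact ⟨r, hmin.hasDerivAt_eq_zero (P.hasDerivAt r), hr⟩

theorem forall_le_eval_iff_forall_isRoot_derivative {P : ℝ[X]} (heven : Even P.natDegree)
    (hlead : 0 ≤ P.leadingCoeff) (m : ℝ) :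
    (∀ t, m ≤ P.eval t) ↔ ∀ r, P.derivative.IsRoot r → m ≤ P.eval r := by
  refine ⟨fun h r _ => h r, fun h t => ?_⟩
  obtain ⟨r, hr, hmin⟩ := exists_isRoot_derivative_forall_eval_le heven hlead
  exact (h r hr).trans (hmin t)

end RealPolynomial

section SymmetricFunctions

variable {R : Type*} [CommRing R] [LinearOrder R] [IsStrictOrderedRing R]

theorem nonneg_of_esymm_nonneg {x y z : R} (h₁ : 0 ≤ x + y + z)
    (h₂ : 0 ≤ x * y + x * z + y * z) (h₃ : 0 ≤ x * y * z) : 0 ≤ x := by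
  by_contra! hx
  have hroot : x ^ 3 = (x + y + z) * x ^ 2 + (x * y + x * z + y * z) * -x + x * y * z := by ring
  have hcube : 0 ≤ x ^ 3 := by
    rw [hroot]
    have := neg_nonneg.mpr hx.le
    positivity
  exact absurd hcube (Odd.pow_neg (by decide) hx).not_ge

theorem nonneg_three_iff_esymm_nonneg {x y z : R} :
    (0 ≤ x ∧ 0 ≤ y ∧ 0 ≤ z) ↔
      0 ≤ x + y + z ∧ 0 ≤ x * y + x * z + y * z ∧ 0 ≤ x * y * z := by
  constructor
  · rintro ⟨hx, hy, hz⟩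
    exact ⟨by positivity, by positivity, by positivity⟩
  · rintro ⟨h₁, h₂, h₃⟩
    have hy : 0 ≤ y :=
      nonneg_of_esymm_nonneg (y := x) (z := z) (by linarith) (by linarith) (by linarith)
    have hz : 0 ≤ z :=
      nonneg_of_esymm_nonneg (y := x) (z := y) (by linarith) (by linarith) (by linarith)
    exact ⟨nonneg_of_esymm_nonneg h₁ h₂ h₃, hy, hz⟩

end SymmetricFunctions

section ComplexPairs

theorem exists_ofReal_or_eq_conj_of_add_mul_real {y z : ℂ} (hadd : (y + z).im = 0)
    (hmul : (y * z).im = 0) :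
    (∃ s u : ℝ, y = s ∧ z = u) ∨ (y.im ≠ 0 ∧ z = conj y) := by
  have him : z.im = -y.im := by rw [Complex.add_im] at hadd; linarith
  rw [Complex.mul_im, him] at hmul
  have hprod : y.im * (z.re - y.re) = 0 := by linarith
  by_cases hy : y.im = 0
  · exact Or.inl ⟨y.re, z.re, Complex.ext rfl hy, Complex.ext rfl (by simp [him, hy])⟩
  · exact Or.inr ⟨hy, Complex.ext (sub_eq_zero.mp ((mul_eq_zero.mp hprod).resolve_left hy)) him⟩

theorem ofReal_sub_mul_ofReal_sub_conj (t : ℝ) (z : ℂ) :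
    (t - z) * (t - conj z) = (Complex.normSq (t - z) : ℂ) := by
  rw [← Complex.mul_conj, map_sub, Complex.conj_ofReal]

end ComplexPairs

section CubicRoots

variable {k K : Type*} [Field k] [Field K] [Algebra k K] {P : Cubic k}

theorem cubic_mem_roots_map_iff (ha : P.a ≠ 0) (t : k) :
    algebraMap k K t ∈ (P.map (algebraMap k K)).roots ↔ P.toPoly.IsRoot t := by
  rw [Cubic.map_roots, mem_roots_map (Cubic.ne_zero_of_a_ne_zero ha), eval₂_at_apply,
    FaithfulSMul.algebraMap_eq_zero_iff, IsRoot]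

theorem cubic_exists_roots_eq_of_isRoot [IsAlgClosed K] (ha : P.a ≠ 0) {r : k}
    (hr : P.toPoly.IsRoot r) :
    ∃ y z : K, (P.map (algebraMap k K)).roots = {algebraMap k K r, y, z} := by
  obtain ⟨rest, hrest⟩ :=
    Multiset.exists_cons_of_mem ((cubic_mem_roots_map_iff (K := K) ha r).mpr hr)
  have hcard : (P.map (algebraMap k K)).roots.card = 3 :=
    (Cubic.splits_iff_card_roots ha).mp (IsAlgClosed.splits _)
  rw [hrest, Multiset.card_cons] at hcard
  obtain ⟨y, z, rfl⟩ := Multiset.card_eq_two.mp (Nat.succ.inj hcard)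
  exact ⟨y, z, hrest⟩

end CubicRoots

section RealCubic

variable {P : Cubic ℝ}

theorem cubic_roots_of_isRoot (ha : P.a ≠ 0) {r : ℝ} (hr : P.toPoly.IsRoot r) :
    (∃ s u : ℝ, (P.map (algebraMap ℝ ℂ)).roots = {(r : ℂ), (s : ℂ), (u : ℂ)}) ∨
      ∃ z : ℂ, z.im ≠ 0 ∧ (P.map (algebraMap ℝ ℂ)).roots = {(r : ℂ), z, conj z} := by
  obtain ⟨y, z, hroots⟩ := cubic_exists_roots_eq_of_isRoot (K := ℂ) ha hr
  have hb := Cubic.b_eq_three_roots ha hroots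
  have hc := Cubic.c_eq_three_roots ha hroots
  simp only [Complex.coe_algebraMap] at hb hc hroots
  have ha' : (P.a : ℂ) ≠ 0 := Complex.ofReal_ne_zero.mpr ha
  have hadd : y + z = ((-(P.b / P.a) - r : ℝ) : ℂ) := by
    push_cast
    field_simp
    linear_combination hb
  have hmul : y * z = ((P.c / P.a - r * (-(P.b / P.a) - r) : ℝ) : ℂ) := by
    rw [Complex.ofReal_sub, Complex.ofReal_mul, ← hadd]
    push_cast
    field_simp
    linear_combination -hc
  rcases exists_ofReal_or_eq_conj_of_add_mul_real (by rw [hadd, Complex.ofReal_im])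
    (by rw [hmul, Complex.ofReal_im]) with ⟨s, u, rfl, rfl⟩ | ⟨hy, rfl⟩
  · exact Or.inl ⟨s, u, hroots⟩
  · exact Or.inr ⟨y, hy, hroots⟩

theorem cubic_discr_nonneg_of_real_roots (ha : P.a ≠ 0) {r s u : ℝ}
    (hroots : (P.map (algebraMap ℝ ℂ)).roots = {(r : ℂ), (s : ℂ), (u : ℂ)}) :
    0 ≤ P.discr := by
  have hdiscr : P.discr = (P.a * P.a * (r - s) * (r - u) * (s - u)) ^ 2 := by
    have h := Cubic.discr_eq_prod_three_roots ha hroots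
    rw [Complex.coe_algebraMap] at h
    exact_mod_cast h
  rw [hdiscr]
  positivity

theorem cubic_discr_neg_of_conj_roots (ha : P.a ≠ 0) {r : ℝ} {z : ℂ} (hz : z.im ≠ 0)
    (hroots : (P.map (algebraMap ℝ ℂ)).roots = {(r : ℂ), z, conj z}) :
    P.discr < 0 := by
  have hdiscr : P.discr = -(2 * P.a ^ 2 * Complex.normSq (r - z) * z.im) ^ 2 := by
    have h := Cubic.discr_eq_prod_three_roots ha hroots
    rw [mul_assoc _ ((r : ℂ) - z), ofReal_sub_mul_ofReal_sub_conj, Complex.sub_conj] at h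
    apply Complex.ofReal_injective
    rw [← Complex.coe_algebraMap, h]
    push_cast
    linear_combination
      (2 * (P.a : ℂ) ^ 2 * (Complex.normSq (r - z) : ℂ) * (z.im : ℂ)) ^ 2 * Complex.I_sq
  have hne : (r : ℂ) - z ≠ 0 := fun h => hz (by simpa using congrArg Complex.im h)
  have := Complex.normSq_pos.mpr hne
  rw [hdiscr, neg_lt_zero]
  positivity

end RealCubic

/-- The quartic polynomial `a t⁴ + b t³ + c t² + d t + e`, given by its coefficients, in analogy
with `Cubic`. -/
structure Quartic (R : Type*) where
  a : R
  b : R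
  c : R
  d : R
  e : R

namespace Quartic

section Semiring

variable {R : Type*} [Semiring R] (F : Quartic R)

/-- The polynomial with the coefficients of a quartic. -/
noncomputable def toPoly : R[X] :=
  C F.a * X ^ 4 + C F.b * X ^ 3 + C F.c * X ^ 2 + C F.d * X + C F.e

/-- The derivative of a quartic, as a cubic. Its roots in a splitting field, counted with
multiplicity, are the critical points. -/
def derivative : Cubic R := ⟨4 * F.a, 3 * F.b, 2 * F.c, F.d⟩

theorem eval_toPoly (t : R) :
    F.toPoly.eval t = F.a * t ^ 4 + F.b * t ^ 3 + F.c * t ^ 2 + F.d * t + F.e := by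
  simp only [toPoly, eval_add, eval_C_mul, eval_C, eval_X_pow, eval_X]

theorem derivative_toPoly : Polynomial.derivative F.toPoly = F.derivative.toPoly := by
  simp only [toPoly, Cubic.toPoly, derivative, derivative_add, derivative_C_mul_X_pow,
    derivative_C_mul_X, derivative_C, add_zero]
  rw [← Nat.cast_comm 4, ← Nat.cast_comm 3, ← Nat.cast_comm 2]
  norm_num

variable {F}

theorem derivative_a_ne_zero [CharZero R] [NoZeroDivisors R] (ha : F.a ≠ 0) :
    F.derivative.a ≠ 0 :=
  mul_ne_zero (OfNat.ofNat_ne_zero 4) ha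

theorem natDegree_toPoly (ha : F.a ≠ 0) : F.toPoly.natDegree = 4 := by
  unfold toPoly
  compute_degree!

theorem even_natDegree_toPoly (ha : F.a ≠ 0) : Even F.toPoly.natDegree := by
  rw [natDegree_toPoly ha]
  decide

theorem leadingCoeff_toPoly (ha : F.a ≠ 0) : F.toPoly.leadingCoeff = F.a := by
  rw [leadingCoeff, natDegree_toPoly ha]
  simp [toPoly]

end Semiring

section Invariants

variable {R : Type*} [CommRing R] (F : Quartic R)

/-- The invariant `G`: `256 a³` times the sum of the values at the critical points. -/
def criticalSum : R :=
  768 * F.a ^ 3 * F.e - 64 * F.a ^ 2 * (3 * F.b * F.d + 2 * F.c ^ 2)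
    + 144 * F.a * F.b ^ 2 * F.c - 27 * F.b ^ 4

/-- The invariant `H`: `128 a³` times the sum of the pairwise products of the values at the
critical points. -/
def criticalPairSum : R :=
  384 * F.a ^ 3 * F.e ^ 2
    - 8 * F.a ^ 2 * (24 * F.b * F.d * F.e + 16 * F.c ^ 2 * F.e - 9 * F.c * F.d ^ 2)
    + F.a * (144 * F.b ^ 2 * F.c * F.e - 3 * F.b ^ 2 * F.d ^ 2 - 40 * F.b * F.c ^ 2 * F.d
      + 8 * F.c ^ 4)
    - F.b ^ 2 * (27 * F.b ^ 2 * F.e - 9 * F.b * F.c * F.d + 2 * F.c ^ 3)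

/-- The invariant `K`: the discriminant of the quartic, which is `256 a³` times the product of the
values at the critical points. -/
def discr : R :=
  256 * F.a ^ 3 * F.e ^ 3 - 192 * F.a ^ 2 * F.b * F.d * F.e ^ 2
    - 128 * F.a ^ 2 * F.c ^ 2 * F.e ^ 2 + 144 * F.a ^ 2 * F.c * F.d ^ 2 * F.e
    - 27 * F.a ^ 2 * F.d ^ 4 + 144 * F.a * F.b ^ 2 * F.c * F.e ^ 2
    - 6 * F.a * F.b ^ 2 * F.d ^ 2 * F.e - 80 * F.a * F.b * F.c ^ 2 * F.d * F.e
    + 18 * F.a * F.b * F.c * F.d ^ 3 + 16 * F.a * F.c ^ 4 * F.e - 4 * F.a * F.c ^ 3 * F.d ^ 2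
    - 27 * F.b ^ 4 * F.e ^ 2 + 18 * F.b ^ 3 * F.c * F.d * F.e - 4 * F.b ^ 3 * F.d ^ 3
    - 4 * F.b ^ 2 * F.c ^ 3 * F.e + F.b ^ 2 * F.c ^ 2 * F.d ^ 2

end Invariants

theorem aeval_toPoly {k K : Type*} [CommSemiring k] [Semiring K] [Algebra k K] (F : Quartic k)
    (t : K) :
    aeval t F.toPoly = algebraMap k K F.a * t ^ 4 + algebraMap k K F.b * t ^ 3
      + algebraMap k K F.c * t ^ 2 + algebraMap k K F.d * t + algebraMap k K F.e := by
  simp only [toPoly, map_add, map_mul, map_pow, aeval_C, aeval_X]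

section CriticalValues

variable {k K : Type*} [Field k] [Field K] [CharZero K] [Algebra k K] {F : Quartic k} {x y z : K}

theorem coeffs_eq_of_critical_points (ha : F.a ≠ 0)
    (hroots : (F.derivative.map (algebraMap k K)).roots = {x, y, z}) :
    algebraMap k K F.b = -(4 / 3) * algebraMap k K F.a * (x + y + z) ∧
      algebraMap k K F.c = 2 * algebraMap k K F.a * (x * y + x * z + y * z) ∧
      algebraMap k K F.d = -4 * algebraMap k K F.a * (x * y * z) := by
  have : CharZero k := (algebraMap k K).charZero
  have ha' := derivative_a_ne_zero ha
  have hb := Cubic.b_eq_three_roots ha' hroots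
  have hc := Cubic.c_eq_three_roots ha' hroots
  have hd := Cubic.d_eq_three_roots ha' hroots
  simp only [derivative, map_mul, map_ofNat] at hb hc hd
  refine ⟨?_, ?_, ?_⟩
  · linear_combination hb / 3
  · linear_combination hc / 2
  · linear_combination hd

theorem criticalSum_eq_sum_aeval (ha : F.a ≠ 0)
    (hroots : (F.derivative.map (algebraMap k K)).roots = {x, y, z}) :
    algebraMap k K F.criticalSum = 256 * algebraMap k K F.a ^ 3 *
      (aeval x F.toPoly + aeval y F.toPoly + aeval z F.toPoly) := by
  obtain ⟨hb, hc, hd⟩ := coeffs_eq_of_critical_points ha hroots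
  simp only [criticalSum, aeval_toPoly, map_add, map_sub, map_mul, map_pow, map_ofNat, hb, hc, hd]
  ring

theorem criticalPairSum_eq_sum_mul_aeval (ha : F.a ≠ 0)
    (hroots : (F.derivative.map (algebraMap k K)).roots = {x, y, z}) :
    algebraMap k K F.criticalPairSum = 128 * algebraMap k K F.a ^ 3 *
      (aeval x F.toPoly * aeval y F.toPoly + aeval x F.toPoly * aeval z F.toPoly
        + aeval y F.toPoly * aeval z F.toPoly) := by
  obtain ⟨hb, hc, hd⟩ := coeffs_eq_of_critical_points ha hroots
  simp only [criticalPairSum, aeval_toPoly, map_add, map_sub, map_mul, map_pow, map_ofNat,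
    hb, hc, hd]
  ring

theorem discr_eq_prod_aeval (ha : F.a ≠ 0)
    (hroots : (F.derivative.map (algebraMap k K)).roots = {x, y, z}) :
    algebraMap k K F.discr = 256 * algebraMap k K F.a ^ 3 *
      (aeval x F.toPoly * aeval y F.toPoly * aeval z F.toPoly) := by
  obtain ⟨hb, hc, hd⟩ := coeffs_eq_of_critical_points ha hroots
  simp only [discr, aeval_toPoly, map_add, map_sub, map_mul, map_pow, map_ofNat, hb, hc, hd]
  ring

theorem aeval_eq_of_critical_zeros (ha : F.a ≠ 0)
    (hroots : (F.derivative.map (algebraMap k K)).roots = {x, y, z}) (hyz : y ≠ z)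
    (hy : aeval y F.toPoly = 0) (hz : aeval z F.toPoly = 0) (t : K) :
    aeval t F.toPoly = algebraMap k K F.a * ((t - y) * (t - z)) ^ 2 := by
  obtain ⟨hb, hc, hd⟩ := coeffs_eq_of_critical_points ha hroots
  have ha' : algebraMap k K F.a ≠ 0 := (_root_.map_ne_zero _).mpr ha
  rw [aeval_toPoly, hb, hc, hd] at hy hz ⊢
  have hprod : algebraMap k K F.a * (y - z) ^ 3 * (2 * x - (y + z)) = 0 := by
    linear_combination 3 * (hy - hz)
  have hx : x = (y + z) / 2 := by
    have h := (mul_eq_zero.mp hprod).resolve_left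
      (mul_ne_zero ha' (pow_ne_zero 3 (sub_ne_zero.mpr hyz)))
    linear_combination h / 2
  subst hx
  linear_combination hy

end CriticalValues

section Real

theorem aeval_ofReal_toPoly (F : Quartic ℝ) (t : ℝ) :
    aeval (t : ℂ) F.toPoly = ((F.toPoly.eval t : ℝ) : ℂ) :=
  aeval_ofReal (K := ℂ) F.toPoly t

variable {F : Quartic ℝ}

theorem forall_eval_nonneg_iff_forall_mem_roots (ha : 0 < F.a) :
    (∀ t, 0 ≤ F.toPoly.eval t) ↔
      ∀ t : ℝ, (t : ℂ) ∈ (F.derivative.map (algebraMap ℝ ℂ)).roots → 0 ≤ F.toPoly.eval t := by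
  have ha' := derivative_a_ne_zero ha.ne'
  rw [forall_le_eval_iff_forall_isRoot_derivative (even_natDegree_toPoly ha.ne')
    (leadingCoeff_toPoly ha.ne' ▸ ha.le), derivative_toPoly]
  simp only [← cubic_mem_roots_map_iff (K := ℂ) ha', Complex.coe_algebraMap]

theorem forall_eval_nonneg_iff_of_real_critical_points (ha : 0 < F.a) {r s u : ℝ}
    (hroots : (F.derivative.map (algebraMap ℝ ℂ)).roots = {(r : ℂ), (s : ℂ), (u : ℂ)}) :
    (∀ t, 0 ≤ F.toPoly.eval t) ↔ 0 ≤ F.criticalSum ∧ 0 ≤ F.criticalPairSum ∧ 0 ≤ F.discr := by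
  set f : ℝ → ℝ := fun t => F.toPoly.eval t with hf
  have haeval (t : ℝ) : aeval (t : ℂ) F.toPoly = (f t : ℂ) := aeval_ofReal_toPoly F t
  have hsum : F.criticalSum = 256 * F.a ^ 3 * (f r + f s + f u) := by
    have h := criticalSum_eq_sum_aeval ha.ne' hroots
    simp only [haeval, Complex.coe_algebraMap] at h
    exact_mod_cast h
  have hpairs : F.criticalPairSum = 128 * F.a ^ 3 * (f r * f s + f r * f u + f s * f u) := by
    have h := criticalPairSum_eq_sum_mul_aeval ha.ne' hroots
    simp only [haeval, Complex.coe_algebraMap] at h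
    exact_mod_cast h
  have hdiscr : F.discr = 256 * F.a ^ 3 * (f r * f s * f u) := by
    have h := discr_eq_prod_aeval ha.ne' hroots
    simp only [haeval, Complex.coe_algebraMap] at h
    exact_mod_cast h
  rw [forall_eval_nonneg_iff_forall_mem_roots ha, hroots, hsum, hpairs, hdiscr,
    mul_nonneg_iff_of_pos_left (by positivity), mul_nonneg_iff_of_pos_left (by positivity),
    mul_nonneg_iff_of_pos_left (by positivity), ← nonneg_three_iff_esymm_nonneg]
  simp [hf]

theorem discr_eq_of_conj_critical_points (ha : F.a ≠ 0) {r : ℝ} {z : ℂ}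
    (hroots : (F.derivative.map (algebraMap ℝ ℂ)).roots = {(r : ℂ), z, conj z}) :
    F.discr = 256 * F.a ^ 3 * (F.toPoly.eval r * Complex.normSq (aeval z F.toPoly)) := by
  have h := discr_eq_prod_aeval ha hroots
  rw [aeval_ofReal_toPoly, aeval_conj, mul_assoc (Complex.ofReal _), Complex.mul_conj,
    Complex.coe_algebraMap] at h
  exact_mod_cast h

theorem eval_nonneg_of_nonreal_critical_zero (ha : 0 < F.a) {r : ℝ} {z : ℂ} (hz : z.im ≠ 0)
    (hroots : (F.derivative.map (algebraMap ℝ ℂ)).roots = {(r : ℂ), z, conj z})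
    (hzero : aeval z F.toPoly = 0) (t : ℝ) : 0 ≤ F.toPoly.eval t := by
  have hzero' : aeval (conj z) F.toPoly = 0 := by rw [aeval_conj, hzero, map_zero]
  have hne : z ≠ conj z := fun h => hz (Complex.conj_eq_iff_im.mp h.symm)
  have h := aeval_eq_of_critical_zeros ha.ne' hroots hne hzero hzero' t
  have heval : F.toPoly.eval t = F.a * Complex.normSq (t - z) ^ 2 := by
    rw [aeval_ofReal_toPoly, ofReal_sub_mul_ofReal_sub_conj, Complex.coe_algebraMap] at h
    exact_mod_cast h
  rw [heval]
  positivity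

theorem forall_eval_nonneg_iff_of_conj_critical_points (ha : 0 < F.a) {r : ℝ} {z : ℂ}
    (hz : z.im ≠ 0)
    (hroots : (F.derivative.map (algebraMap ℝ ℂ)).roots = {(r : ℂ), z, conj z}) :
    (∀ t, 0 ≤ F.toPoly.eval t) ↔ 0 ≤ F.discr := by
  rw [discr_eq_of_conj_critical_points ha.ne' hroots,
    mul_nonneg_iff_of_pos_left (by positivity)]
  by_cases hzero : aeval z F.toPoly = 0
  · simpa [hzero] using eval_nonneg_of_nonreal_critical_zero ha hz hroots hzero
  · have hreal (t : ℝ) : (t : ℂ) ∈ ({(r : ℂ), z, conj z} : Multiset ℂ) ↔ t = r := by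
      have h₁ : (t : ℂ) ≠ z := fun h => hz (by rw [← h, Complex.ofReal_im])
      have h₂ : (t : ℂ) ≠ conj z := fun h => hz (by simpa using congrArg Complex.im h.symm)
      simp [h₁, h₂]
    rw [forall_eval_nonneg_iff_forall_mem_roots ha, hroots,
      mul_nonneg_iff_of_pos_right (Complex.normSq_pos.mpr hzero)]
    simp only [hreal, forall_eq]

theorem forall_eval_nonneg_iff (ha : 0 < F.a) :
    (∀ t, 0 ≤ F.toPoly.eval t) ↔
      (0 ≤ F.discr ∧ F.derivative.discr < 0) ∨
        (0 ≤ F.criticalSum ∧ 0 ≤ F.criticalPairSum ∧ 0 ≤ F.discr) := by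
  have ha' := derivative_a_ne_zero ha.ne'
  obtain ⟨r, hr, -⟩ := exists_isRoot_derivative_forall_eval_le (even_natDegree_toPoly ha.ne')
    (leadingCoeff_toPoly ha.ne' ▸ ha.le)
  rw [derivative_toPoly] at hr
  rcases cubic_roots_of_isRoot ha' hr with ⟨s, u, hroots⟩ | ⟨z, hz, hroots⟩
  · have hΔ := cubic_discr_nonneg_of_real_roots ha' hroots
    rw [forall_eval_nonneg_iff_of_real_critical_points ha hroots]
    simp [hΔ.not_gt]
  · have hΔ := cubic_discr_neg_of_conj_roots ha' hz hroots
    rw [forall_eval_nonneg_iff_of_conj_critical_points ha hz hroots]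
    tauto

end Real

end Quartic

/-- Discriminants for global nonnegativity of a quartic with positive leading
coefficient: `F ≥ 0` on `ℝ` iff `(K ≥ 0 and Δ < 0)` or `(G, H, K ≥ 0)`. -/
theorem quartic_nonneg_iff_discriminants (A B C D E : ℝ) (hA : 0 < A)
    (Δ G H K : ℝ)
    (hΔ : Δ = -108 * A ^ 2 * D ^ 2 + 4 * A * C * (27 * B * D - 8 * C ^ 2)
      - 9 * B ^ 2 * (3 * B * D - C ^ 2))
    (hG : G = 768 * A ^ 3 * E - 64 * A ^ 2 * (3 * B * D + 2 * C ^ 2)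
      + 144 * A * B ^ 2 * C - 27 * B ^ 4)
    (hH : H = 384 * A ^ 3 * E ^ 2
      - 8 * A ^ 2 * (24 * B * D * E + 16 * C ^ 2 * E - 9 * C * D ^ 2)
      + A * (144 * B ^ 2 * C * E - 3 * B ^ 2 * D ^ 2 - 40 * B * C ^ 2 * D + 8 * C ^ 4)
      - B ^ 2 * (27 * B ^ 2 * E - 9 * B * C * D + 2 * C ^ 3))
    (hK : K = 256 * A ^ 3 * E ^ 3 - 192 * A ^ 2 * B * D * E ^ 2
      - 128 * A ^ 2 * C ^ 2 * E ^ 2 + 144 * A ^ 2 * C * D ^ 2 * E - 27 * A ^ 2 * D ^ 4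
      + 144 * A * B ^ 2 * C * E ^ 2 - 6 * A * B ^ 2 * D ^ 2 * E
      - 80 * A * B * C ^ 2 * D * E + 18 * A * B * C * D ^ 3 + 16 * A * C ^ 4 * E
      - 4 * A * C ^ 3 * D ^ 2 - 27 * B ^ 4 * E ^ 2 + 18 * B ^ 3 * C * D * E
      - 4 * B ^ 3 * D ^ 3 - 4 * B ^ 2 * C ^ 3 * E + B ^ 2 * C ^ 2 * D ^ 2) :
    (∀ t : ℝ, A * t ^ 4 + B * t ^ 3 + C * t ^ 2 + D * t + E ≥ 0) ↔
    ((0 ≤ K ∧ Δ < 0) ∨ (0 ≤ G ∧ 0 ≤ H ∧ 0 ≤ K)) := by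
  set F : Quartic ℝ := ⟨A, B, C, D, E⟩
  have hG' : G = F.criticalSum := hG
  have hH' : H = F.criticalPairSum := hH
  have hK' : K = F.discr := hK
  have hΔ' : Δ < 0 ↔ F.derivative.discr < 0 := by
    have hfour : F.derivative.discr = 4 * Δ := by
      simp only [hΔ, F, Quartic.derivative, Cubic.discr]
      ring
    constructor <;> intro <;> linarith
  rw [hG', hH', hK', hΔ', ← F.forall_eval_nonneg_iff hA]
  simp only [F.eval_toPoly, ge_iff_le, F]
end
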